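/- arXiv:2410.01243 — 4 statements merged into one kernel-verified Lean document; each statement's English description precedes it below -/
import Mathlib

section
/- Let λ and ρ be real polynomials with nonnegative coefficients satisfying λ(1) = 1 and ρ(1) = 1. Suppose 0 ≤ ε₁ ≤ ε₂ ≤ 1 and there exists x₀ ∈ (0,1] with x₀ ≤ ε₁·λ(1 − ρ(1 − x₀)). Then there exists x ∈ [x₀, 1] with x = ε₂·λ(1 − ρ(1 − x)). In particular, the set of ε ∈ [0,1] for which the equation x = ε·λ(1 − ρ(1 − x)) has a solution in (0,1] is upward closed, so the decoding threshold ε* = inf{ε ∈ [0,1] : x = ε·λ(1 − ρ(1 − x)) has a solution x ∈ (0,1]} is well defined as a sharp threshold. -/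
open Polynomial

/-!
On `[0, 1]` the map `x ↦ ε₂ * λ(1 - ρ(1 - x))` is continuous with values at most `1`. At `x₀` it
lies on or above the diagonal, since raising `ε₁` to `ε₂` only increases it, and at `1` it lies on
or below the diagonal. The intermediate value theorem gives a fixed point in between.
-/

section PolynomialNonnegCoeff

variable {R : Type*} [Semiring R] [PartialOrder R] [IsOrderedRing R] {p : R[X]}

theorem eval_nonneg_of_coeff_nonneg (hp : ∀ i, 0 ≤ p.coeff i) {x : R} (hx : 0 ≤ x) :
    0 ≤ p.eval x := by
  rw [eval_eq_sum_range]
  exact Finset.sum_nonneg fun i _ ↦ mul_nonneg (hp i) (pow_nonneg hx i)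

theorem monotoneOn_eval_of_coeff_nonneg (hp : ∀ i, 0 ≤ p.coeff i) :
    MonotoneOn (fun x ↦ p.eval x) (Set.Ici 0) := by
  intro x hx y _ hxy
  simp only [eval_eq_sum_range]
  exact Finset.sum_le_sum fun i _ ↦
    mul_le_mul_of_nonneg_left (pow_le_pow_left₀ hx hxy i) (hp i)

theorem mapsTo_eval_Icc_of_coeff_nonneg (hp : ∀ i, 0 ≤ p.coeff i) (hp1 : p.eval 1 ≤ 1) :
    Set.MapsTo (fun x ↦ p.eval x) (Set.Icc 0 1) (Set.Icc 0 1) := fun _ hx ↦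
  ⟨eval_nonneg_of_coeff_nonneg hp hx.1,
    (monotoneOn_eval_of_coeff_nonneg hp hx.1 zero_le_one hx.2).trans hp1⟩

end PolynomialNonnegCoeff

/-- The density evolution map `x ↦ λ(1 - ρ(1 - x))` of the degree distribution pair `(λ, ρ)`,
without the channel factor `ε`: one round of message passing on the erasure channel with erasure
probability `ε` turns the message erasure probability `x` into `ε * densityEvolution λ ρ x`. -/
def densityEvolution {R : Type*} [Ring R] (lam rho : R[X]) (x : R) : R :=
  lam.eval (1 - rho.eval (1 - x))

theorem continuous_densityEvolution {R : Type*} [Ring R] [TopologicalSpace R]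
    [IsTopologicalRing R] (lam rho : R[X]) : Continuous (densityEvolution lam rho) := by
  unfold densityEvolution
  fun_prop

theorem mapsTo_densityEvolution_Icc {R : Type*} [Ring R] [PartialOrder R] [IsOrderedRing R]
    {lam rho : R[X]} (hlam : ∀ i, 0 ≤ lam.coeff i) (hrho : ∀ i, 0 ≤ rho.coeff i)
    (hlam1 : lam.eval 1 ≤ 1) (hrho1 : rho.eval 1 ≤ 1) :
    Set.MapsTo (densityEvolution lam rho) (Set.Icc 0 1) (Set.Icc 0 1) := fun _ hx ↦
  mapsTo_eval_Icc_of_coeff_nonneg hlam hlam1 <| Set.Icc.one_sub_mem <|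
    mapsTo_eval_Icc_of_coeff_nonneg hrho hrho1 <| Set.Icc.one_sub_mem hx

theorem exists_mem_Icc_eq_mul_of_le_mul {g : ℝ → ℝ} {a b ε₁ ε₂ : ℝ} (hab : a ≤ b)
    (hg : ContinuousOn g (Set.Icc a b)) (hga : 0 ≤ g a) (hgb : g b ∈ Set.Icc 0 b)
    (hε : ε₁ ≤ ε₂) (hε₂ : ε₂ ≤ 1) (ha : a ≤ ε₁ * g a) :
    ∃ x ∈ Set.Icc a b, x = ε₂ * g x := by
  have above_diagonal : a ≤ ε₂ * g a := ha.trans (mul_le_mul_of_nonneg_right hε hga)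
  have below_diagonal : ε₂ * g b ≤ b := (mul_le_of_le_one_left hgb.1 hε₂).trans hgb.2
  obtain ⟨x, hx, hfix⟩ :=
    exists_mem_Icc_isFixedPt (hg.const_mul ε₂) hab above_diagonal below_diagonal
  exact ⟨x, hx, hfix.eq.symm⟩

theorem decoding_threshold_upward_closed_general {g : ℝ → ℝ}
    (hg : ContinuousOn g (Set.Icc 0 1)) (hmaps : Set.MapsTo g (Set.Icc 0 1) (Set.Icc 0 1))
    {ε₁ ε₂ x₀ : ℝ} (hε₁₂ : ε₁ ≤ ε₂) (hε₂ : ε₂ ≤ 1) (hx₀ : x₀ ∈ Set.Icc 0 1)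
    (hineq : x₀ ≤ ε₁ * g x₀) :
    (∃ x ∈ Set.Icc x₀ 1, x = ε₂ * g x) ∧
    (∀ ε, (∃ x ∈ Set.Ioc 0 1, x = ε * g x) →
      ∀ ε' ≤ 1, ε ≤ ε' → ∃ x ∈ Set.Ioc 0 1, x = ε' * g x) := by
  have fixed_point_above {ε ε' y : ℝ} (hy : y ∈ Set.Icc 0 1) (hle : ε ≤ ε') (hε' : ε' ≤ 1)
      (hyε : y ≤ ε * g y) : ∃ x ∈ Set.Icc y 1, x = ε' * g x :=
    exists_mem_Icc_eq_mul_of_le_mul hy.2 (hg.mono (Set.Icc_subset_Icc_left hy.1))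
      (hmaps hy).1 (hmaps ⟨zero_le_one, le_rfl⟩) hle hε' hyε
  refine ⟨fixed_point_above hx₀ hε₁₂ hε₂ hineq, ?_⟩
  rintro ε ⟨y, hy, hyε⟩ ε' hε' hle
  obtain ⟨x, hx, hxε'⟩ := fixed_point_above (Set.Ioc_subset_Icc_self hy) hle hε' hyε.le
  exact ⟨x, ⟨hy.1.trans_le hx.1, hx.2⟩, hxε'⟩

/-- If at erasure probability `ε₁` the fixed-point inequality
`x₀ ≤ ε₁·λ(1 − ρ(1 − x₀))` has a witness `x₀ ∈ (0,1]`, then for any larger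
erasure probability `ε₂ ∈ [ε₁, 1]` there is an actual fixed point
`x ∈ [x₀, 1]` of `x = ε₂·λ(1 − ρ(1 − x))`.  In particular the set of
`ε ∈ [0,1]` for which `x = ε·λ(1 − ρ(1 − x))` has a solution in `(0,1]`
is upward closed, so the decoding threshold is a sharp threshold. -/
theorem decoding_threshold_upward_closed
    (lam rho : Polynomial ℝ)
    (hlam : ∀ i, 0 ≤ lam.coeff i) (hrho : ∀ i, 0 ≤ rho.coeff i)
    (hlam1 : lam.eval 1 = 1) (hrho1 : rho.eval 1 = 1)
    (ε₁ ε₂ : ℝ) (hε₁ : 0 ≤ ε₁) (hε₁₂ : ε₁ ≤ ε₂) (hε₂ : ε₂ ≤ 1)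
    (x₀ : ℝ) (hx₀ : x₀ ∈ Set.Ioc (0:ℝ) 1)
    (hineq : x₀ ≤ ε₁ * lam.eval (1 - rho.eval (1 - x₀))) :
    (∃ x ∈ Set.Icc x₀ 1, x = ε₂ * lam.eval (1 - rho.eval (1 - x))) ∧
    (∀ ε ∈ Set.Icc (0:ℝ) 1,
      (∃ x ∈ Set.Ioc (0:ℝ) 1, x = ε * lam.eval (1 - rho.eval (1 - x))) →
      ∀ ε' ∈ Set.Icc (0:ℝ) 1, ε ≤ ε' →
        ∃ x ∈ Set.Ioc (0:ℝ) 1, x = ε' * lam.eval (1 - rho.eval (1 - x))) := by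
  obtain ⟨fixed_point, upward⟩ := decoding_threshold_upward_closed_general
    (continuous_densityEvolution lam rho).continuousOn
    (mapsTo_densityEvolution_Icc hlam hrho hlam1.le hrho1.le)
    hε₁₂ hε₂ (Set.Ioc_subset_Icc_self hx₀) hineq
  exact ⟨fixed_point, fun ε _ hsol ε' hε' ↦ upward ε hsol ε' hε'.2⟩
end

section
/- Fix d > 0 and ε ∈ (0,1]. Let (R_n) and (T_n) be sequences of positive reals with R_n → ∞, T_n → ∞, and T_n/R_n → 0. Then (ε·T_n/R_n) · (1 − (1 − d/R_n)^{R_n/ε}) / (1 − (1 − d/R_n)^{T_n}) converges to ε·(1 − e^{−d/ε})/d as n → ∞. Moreover, if d ≥ 1 then this limit is strictly less than ε. -/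
open Filter Real

/-!
Write `p = d / R → 0`. Since `s * log (1 - p) ~ -(s * p)`, the power `(1 - p) ^ s` is governed by
`s * p` alone. For `s = R / ε` this product is `d / ε`, so the power tends to `exp (-d / ε)`. For
`s = T` it is `d * T / R → 0`, so `1 - (1 - p) ^ T ~ d * T / R`, and the factor `T / R` cancels.
-/

open Asymptotics Topology

theorem isEquivalent_exp_sub_one : (fun x : ℝ ↦ exp x - 1) ~[𝓝 0] id := by
  simpa using! (hasDerivAt_exp 0).isLittleO

theorem isEquivalent_log_one_add : (fun x : ℝ ↦ log (1 + x)) ~[𝓝 0] id := by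
  have hderiv : HasDerivAt (fun x : ℝ ↦ log (1 + x)) 1 0 := by
    simpa using ((hasDerivAt_id (0 : ℝ)).const_add 1).log (by simp)
  simpa using! hderiv.isLittleO

section OneAddRpow

variable {ι : Type*} {l : Filter ι} {x s : ι → ℝ}

theorem isEquivalent_mul_log_one_add (hx : Tendsto x l (𝓝 0)) :
    (fun i ↦ s i * log (1 + x i)) ~[l] fun i ↦ s i * x i :=
  IsEquivalent.refl.mul (isEquivalent_log_one_add.comp_tendsto hx)

theorem one_add_rpow_eventuallyEq_exp (hx : Tendsto x l (𝓝 0)) :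
    (fun i ↦ (1 + x i) ^ s i) =ᶠ[l] fun i ↦ exp (s i * log (1 + x i)) := by
  filter_upwards [hx.eventually_const_lt neg_one_lt_zero] with i hi
  rw [rpow_def_of_pos (by linarith), mul_comm]

theorem tendsto_one_add_rpow_exp {c : ℝ} (hx : Tendsto x l (𝓝 0))
    (hsx : Tendsto (fun i ↦ s i * x i) l (𝓝 c)) :
    Tendsto (fun i ↦ (1 + x i) ^ s i) l (𝓝 (exp c)) :=
  ((isEquivalent_mul_log_one_add hx).symm.tendsto_nhds hsx).rexp.congr'
    (one_add_rpow_eventuallyEq_exp hx).symm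

theorem isEquivalent_one_add_rpow_sub_one (hx : Tendsto x l (𝓝 0))
    (hsx : Tendsto (fun i ↦ s i * x i) l (𝓝 0)) :
    (fun i ↦ (1 + x i) ^ s i - 1) ~[l] fun i ↦ s i * x i := by
  have hlog := isEquivalent_mul_log_one_add (s := s) hx
  have hexp : (fun i ↦ exp (s i * log (1 + x i)) - 1) ~[l] fun i ↦ s i * log (1 + x i) :=
    isEquivalent_exp_sub_one.comp_tendsto (hlog.symm.tendsto_nhds hsx)
  exact ((one_add_rpow_eventuallyEq_exp hx).sub EventuallyEq.rfl).trans_isEquivalent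
    (hexp.trans hlog)

end OneAddRpow

section OneSubDivRpow

variable {ι : Type*} {l : Filter ι} {R T : ι → ℝ}

theorem tendsto_one_sub_div_rpow_exp {c : ℝ} (d : ℝ) (hR : Tendsto R l atTop)
    (hratio : Tendsto (fun i ↦ T i / R i) l (𝓝 c)) :
    Tendsto (fun i ↦ (1 - d / R i) ^ T i) l (𝓝 (exp (-d * c))) := by
  simp only [sub_eq_add_neg, ← neg_div]
  refine tendsto_one_add_rpow_exp (hR.const_div_atTop (-d)) ?_
  exact (hratio.const_mul (-d)).congr fun i ↦ by ring

theorem isEquivalent_one_sub_one_sub_div_rpow (d : ℝ) (hR : Tendsto R l atTop)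
    (hratio : Tendsto (fun i ↦ T i / R i) l (𝓝 0)) :
    (fun i ↦ 1 - (1 - d / R i) ^ T i) ~[l] fun i ↦ d * (T i / R i) := by
  have hprod : Tendsto (fun i ↦ T i * (-d / R i)) l (𝓝 0) := by
    simpa [mul_div_left_comm] using hratio.const_mul (-d)
  convert! (isEquivalent_one_add_rpow_sub_one (hR.const_div_atTop (-d)) hprod).neg using 2 <;>
    ring_nf

theorem tendsto_div_one_sub_one_sub_div_rpow {d : ℝ} (hd : d ≠ 0) (hR : Tendsto R l atTop)
    (hT : ∀ᶠ i in l, T i ≠ 0) (hratio : Tendsto (fun i ↦ T i / R i) l (𝓝 0)) :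
    Tendsto (fun i ↦ T i / R i / (1 - (1 - d / R i) ^ T i)) l (𝓝 d⁻¹) := by
  have hequiv := IsEquivalent.refl (u := fun i ↦ T i / R i) |>.div
    (isEquivalent_one_sub_one_sub_div_rpow d hR hratio)
  refine (hequiv.trans_eventuallyEq ?_).tendsto_const
  filter_upwards [hT, hR.eventually_ne_atTop 0] with i hTi hRi
  simp only [Pi.div_apply, Function.const_apply]
  field_simp

end OneSubDivRpow

theorem mul_one_sub_exp_div_lt_self {d ε : ℝ} (hε : 0 < ε) (hd : 1 ≤ d) (y : ℝ) :
    ε * (1 - exp y) / d < ε := by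
  have hlt : 1 - exp y < d := by linarith [exp_pos y]
  rw [div_lt_iff₀ (by linarith)]
  gcongr

theorem matching_bound_limit_texts_slower_general {ι : Type*} {l : Filter ι} {d ε : ℝ}
    (hd : d ≠ 0) (hε : 0 < ε) {R T : ι → ℝ} (hR : Tendsto R l atTop)
    (hT : ∀ᶠ i in l, T i ≠ 0) (hratio : Tendsto (fun i ↦ T i / R i) l (𝓝 0)) :
    Tendsto
      (fun i ↦ (ε * T i / R i) * (1 - (1 - d / R i) ^ (R i / ε)) / (1 - (1 - d / R i) ^ T i))
      l (𝓝 (ε * (1 - exp (-d / ε)) / d)) ∧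
    (1 ≤ d → ε * (1 - exp (-d / ε)) / d < ε) := by
  refine ⟨?_, fun h ↦ mul_one_sub_exp_div_lt_self hε h _⟩
  have hexponent : Tendsto (fun i ↦ R i / ε / R i) l (𝓝 ε⁻¹) := by
    refine tendsto_const_nhds.congr' ?_
    filter_upwards [hR.eventually_ne_atTop 0] with i hRi
    field_simp
  have hnum := (tendsto_one_sub_div_rpow_exp d hR hexponent).const_sub 1
  have hquot := tendsto_div_one_sub_one_sub_div_rpow hd hR hT hratio
  convert! (hnum.const_mul ε).mul hquot using 2
  ring

/-- If `T_n/R_n → 0` with `R_n, T_n → ∞`, then the matching-condition bound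
`(ε·T_n/R_n)·(1 − (1 − d/R_n)^{R_n/ε})/(1 − (1 − d/R_n)^{T_n})` converges to
`ε·(1 − e^{−d/ε})/d`, which is strictly less than `ε` when `d ≥ 1`. -/
theorem matching_bound_limit_texts_slower
    (d ε : ℝ) (hd : 0 < d) (hε : ε ∈ Set.Ioc (0:ℝ) 1)
    (R T : ℕ → ℝ) (hR : ∀ n, 0 < R n) (hT : ∀ n, 0 < T n)
    (hRtop : Tendsto R atTop atTop) (hTtop : Tendsto T atTop atTop)
    (hratio : Tendsto (fun n => T n / R n) atTop (nhds 0)) :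
    Tendsto
      (fun n => (ε * T n / R n) * (1 - (1 - d / R n) ^ (R n / ε))
          / (1 - (1 - d / R n) ^ (T n)))
      atTop (nhds (ε * (1 - Real.exp (-d / ε)) / d)) ∧
    (1 ≤ d → ε * (1 - Real.exp (-d / ε)) / d < ε) :=
  matching_bound_limit_texts_slower_general hd.ne' hε.1 hRtop (.of_forall fun n ↦ (hT n).ne') hratio
end

section
/- Fix d ≥ 1 and ε ∈ (0,1). Let (R_n) and (T_n) be sequences of positive reals with R_n → ∞, T_n → ∞, and T_n/R_n → 0, and let p_n = d/R_n. Define λ_n(x) = (p_n·x + 1 − p_n)^{T_n − 1} and ρ̃_n(x) = (p_n·x + 1 − p_n)^{R_n/ε − 1}. Then for all sufficiently large n, (∫₀¹ ρ̃_n(u) du)/(∫₀¹ λ_n(u) du) < ε. -/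
open Filter Real

/-! Both integrals have the form `∫₀¹ (p u + 1 - p) ^ (a - 1) du` with `p → 0`. If `p a → s`, the
integrand converges boundedly to `exp (s (u - 1))`, so only the limit `s` matters. It is `d / ε` for
`ρ̃` and `0` for `λ`, hence the quotient converges to `(1 - exp (-d / ε)) / (d / ε)`, which is less
than `ε` exactly when `1 - exp (-d / ε) < d`. -/

open scoped Topology

theorem quasiconvexOn_rpow_const (r : ℝ) : QuasiconvexOn ℝ (Set.Ioi 0) fun x : ℝ => x ^ r := by
  rcases le_total 0 r with hr | hr
  · refine MonotoneOn.quasiconvexOn (fun x hx y _ hxy => ?_) (convex_Ioi 0)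
    exact rpow_le_rpow (Set.mem_Ioi.mp hx).le hxy hr
  · refine AntitoneOn.quasiconvexOn (fun x hx y _ hxy => ?_) (convex_Ioi 0)
    exact rpow_le_rpow_of_nonpos hx hxy hr

theorem affine_rpow_le_max {p u : ℝ} (hp : p < 1) (hu : u ∈ Set.Icc (0 : ℝ) 1) (r : ℝ) :
    (p * u + 1 - p) ^ r ≤ max 1 ((1 - p) ^ r) := by
  have h_conv := (quasiconvexOn_iff_le_max.mp (quasiconvexOn_rpow_const r)).2
    (Set.mem_Ioi.mpr one_pos) (Set.mem_Ioi.mpr (sub_pos.mpr hp)) hu.1 (sub_nonneg.mpr hu.2)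
    (add_sub_cancel u 1)
  have h_comb : u • (1 : ℝ) + (1 - u) • (1 - p) = p * u + 1 - p := by
    simp only [smul_eq_mul]; ring
  simpa only [h_comb, one_rpow] using h_conv

theorem integral_exp_mul_sub_one {s : ℝ} (hs : s ≠ 0) :
    ∫ u in (0 : ℝ)..1, exp (s * (u - 1)) = (1 - exp (-s)) / s := by
  simp only [mul_sub, mul_one]
  rw [intervalIntegral.integral_comp_mul_sub exp hs s, integral_exp, smul_eq_mul]
  simp only [mul_one, mul_zero, sub_self, zero_sub, exp_zero]
  ring

section Limits

variable {ι : Type*} {l : Filter ι}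

theorem tendsto_one_add_rpow_of_tendsto_mul {f g : ι → ℝ} {t : ℝ} (hf : Tendsto f l (𝓝 0))
    (hfg : Tendsto (fun i => f i * g i) l (𝓝 t)) :
    Tendsto (fun i => (1 + f i) ^ g i) l (𝓝 (exp t)) := by
  have h_one_add : Tendsto (fun i => 1 + f i) l (𝓝 1) := by simpa using hf.const_add 1
  have h_slope : Tendsto (fun i => dslope log 1 (1 + f i)) l (𝓝 1) := by
    have h_cont : ContinuousAt (dslope log 1) 1 :=
      continuousAt_dslope_same.mpr (differentiableAt_log one_ne_zero)
    simpa [Function.comp_def, dslope_same] using h_cont.tendsto.comp h_one_add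
  have h_log (i : ι) : log (1 + f i) = f i * dslope log 1 (1 + f i) := by
    simpa using (sub_smul_dslope log 1 (1 + f i)).symm
  have h_exponent : Tendsto (fun i => log (1 + f i) * g i) l (𝓝 t) := by
    simpa only [h_log, mul_right_comm, mul_one] using hfg.mul h_slope
  refine ((continuous_exp.tendsto t).comp h_exponent).congr' ?_
  filter_upwards [h_one_add.eventually_const_lt one_pos] with i hi
  exact (rpow_def_of_pos hi (g i)).symm

variable {p a : ι → ℝ} {s : ℝ}

theorem tendsto_affine_rpow_sub_one (hp : Tendsto p l (𝓝 0))
    (hpa : Tendsto (fun i => p i * a i) l (𝓝 s)) (u : ℝ) :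
    Tendsto (fun i => (p i * u + 1 - p i) ^ (a i - 1)) l (𝓝 (exp (s * (u - 1)))) := by
  have h_base : Tendsto (fun i => p i * (u - 1)) l (𝓝 0) := by
    simpa using hp.mul_const (u - 1)
  have h_prod : Tendsto (fun i => p i * (u - 1) * (a i - 1)) l (𝓝 (s * (u - 1))) := by
    convert (hpa.sub hp).mul_const (u - 1) using 2 <;> ring
  convert tendsto_one_add_rpow_of_tendsto_mul h_base h_prod using 3
  ring

theorem tendsto_integral_affine_rpow_sub_one [l.IsCountablyGenerated] (hp : Tendsto p l (𝓝 0))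
    (hpa : Tendsto (fun i => p i * a i) l (𝓝 s)) :
    Tendsto (fun i => ∫ u in (0 : ℝ)..1, (p i * u + 1 - p i) ^ (a i - 1)) l
      (𝓝 (∫ u in (0 : ℝ)..1, exp (s * (u - 1)))) := by
  have h_left : Tendsto (fun i => (1 - p i) ^ (a i - 1)) l (𝓝 (exp (-s))) := by
    simpa using tendsto_affine_rpow_sub_one hp hpa 0
  refine intervalIntegral.tendsto_integral_filter_of_dominated_convergence
    (fun _ => max 1 (exp (-s) + 1)) ?_ ?_ intervalIntegrable_const
    (.of_forall fun u _ => tendsto_affine_rpow_sub_one hp hpa u)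
  · exact .of_forall fun i => Measurable.aestronglyMeasurable (by fun_prop)
  · filter_upwards [hp.eventually_lt_const one_pos,
      h_left.eventually_le_const (lt_add_one _)] with i hpi h_left_le
    refine .of_forall fun u hu => ?_
    rw [Set.uIoc_of_le zero_le_one] at hu
    have h_base : 0 ≤ p i * u + 1 - p i := by nlinarith [hu.1, hu.2]
    rw [norm_of_nonneg (rpow_nonneg h_base _)]
    exact (affine_rpow_le_max hpi (Set.Ioc_subset_Icc_self hu) _).trans
      (max_le_max_left 1 h_left_le)

variable [l.IsCountablyGenerated] {d ε : ℝ} {R T : ι → ℝ}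

theorem tendsto_matching_bound (hd : d ≠ 0) (hε : ε ≠ 0) (hR : Tendsto R l atTop)
    (hTR : Tendsto (fun i => T i / R i) l (𝓝 0)) :
    Tendsto (fun i =>
      (∫ u in (0 : ℝ)..1, ((d / R i) * u + 1 - d / R i) ^ (R i / ε - 1))
        / (∫ u in (0 : ℝ)..1, ((d / R i) * u + 1 - d / R i) ^ (T i - 1)))
      l (𝓝 ((1 - exp (-(d / ε))) / (d / ε))) := by
  have hp : Tendsto (fun i => d / R i) l (𝓝 0) := hR.const_div_atTop d
  have h_text : Tendsto (fun i => d / R i * (R i / ε)) l (𝓝 (d / ε)) := by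
    refine tendsto_const_nhds.congr' ?_
    filter_upwards [hR.eventually_ne_atTop 0] with i hRi
    rw [div_mul_div_cancel₀ hRi]
  have h_concept : Tendsto (fun i => d / R i * T i) l (𝓝 0) := by
    simpa only [mul_zero, mul_div_assoc', div_mul_eq_mul_div] using hTR.const_mul d
  have h_num := tendsto_integral_affine_rpow_sub_one hp h_text
  have h_den := tendsto_integral_affine_rpow_sub_one hp h_concept
  rw [integral_exp_mul_sub_one (div_ne_zero hd hε)] at h_num
  simp only [zero_mul, exp_zero, intervalIntegral.integral_const, sub_zero, one_smul] at h_den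
  simpa only [div_one, Pi.div_def] using h_num.div h_den one_ne_zero

theorem matching_bound_eventually_below_eps_general (hd : 0 < d) (hε : 0 < ε)
    (hdε : 1 - exp (-(d / ε)) < d) (hR : Tendsto R l atTop)
    (hTR : Tendsto (fun i => T i / R i) l (𝓝 0)) :
    ∀ᶠ i in l,
      (∫ u in (0 : ℝ)..1, ((d / R i) * u + 1 - d / R i) ^ (R i / ε - 1))
        / (∫ u in (0 : ℝ)..1, ((d / R i) * u + 1 - d / R i) ^ (T i - 1)) < ε := by
  refine (tendsto_matching_bound hd.ne' hε.ne' hR hTR).eventually_lt_const ?_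
  rwa [div_lt_iff₀ (div_pos hd hε), mul_div_cancel₀ d hε.ne']

end Limits

/-- Part (a) of the compute-optimal scaling proposition: for mean text degree
`d ≥ 1` and erasure fraction `ε ∈ (0,1)`, if the number of texts grows strictly
slower than the number of concepts (`T_n/R_n → 0`), then eventually the
matching-condition upper bound `(∫₀¹ ρ̃_n)/(∫₀¹ λ_n)` on the decoding threshold
falls below `ε`, where `λ_n(x) = (p_n x + 1 − p_n)^{T_n − 1}` and
`ρ̃_n(x) = (p_n x + 1 − p_n)^{R_n/ε − 1}` with `p_n = d/R_n`. -/
theorem matching_bound_eventually_below_eps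
    (d ε : ℝ) (hd : 1 ≤ d) (hε : ε ∈ Set.Ioo (0:ℝ) 1)
    (R T : ℕ → ℝ) (hR : ∀ n, 0 < R n) (hT : ∀ n, 0 < T n)
    (hRtop : Tendsto R atTop atTop) (hTtop : Tendsto T atTop atTop)
    (hratio : Tendsto (fun n => T n / R n) atTop (nhds 0)) :
    ∀ᶠ n in atTop,
      (∫ u in (0:ℝ)..1, ((d / R n) * u + 1 - d / R n) ^ (R n / ε - 1))
        / (∫ u in (0:ℝ)..1, ((d / R n) * u + 1 - d / R n) ^ (T n - 1)) < ε := by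
  exact matching_bound_eventually_below_eps_general (by linarith) hε.1
    (by linarith [exp_pos (-(d / ε))]) hRtop hratio
end

section
/- Fix x ∈ (0,1], d > 0 and ε ∈ (0,1]. Let (R_n) and (T_n) be sequences of positive reals with R_n → ∞, T_n → ∞ and T_n/R_n → ∞ (and d/R_n ≤ 1, x·d/R_n ≤ 1 for all n). Then (1 − (d/R_n)·(1 − x·d/R_n)^{R_n/ε − 1})^{T_n − 1} → 0 as n → ∞. -/
open Filter Real

/-!
Put `s = 1 / ε` and `p = (d / R) (1 - x d / R) ^ (s R - 1)`. Since `(1 - x d / R) ^ (s R - 1)`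
converges to `exp (-x d s) > 0`, the product `p (T - 1)` is asymptotically a positive multiple of
`T / R`, hence tends to infinity, and `(1 - p) ^ (T - 1) ≤ exp (-p (T - 1))`.
-/

section

variable {ι : Type*} {l : Filter ι}

theorem tendsto_one_sub_rpow_zero {p v : ι → ℝ} (hp : ∀ᶠ i in l, p i ≤ 1)
    (hv : ∀ᶠ i in l, 0 ≤ v i) (hpv : Tendsto (fun i => p i * v i) l atTop) :
    Tendsto (fun i => (1 - p i) ^ v i) l (nhds 0) := by
  refine squeeze_zero' ?_ ?_ (tendsto_exp_neg_atTop_nhds_zero.comp hpv)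
  · filter_upwards [hp] with i p_le_one
    exact rpow_nonneg (sub_nonneg.2 p_le_one) _
  · filter_upwards [hp, hv] with i p_le_one v_nonneg
    calc (1 - p i) ^ v i ≤ exp (-p i) ^ v i :=
          rpow_le_rpow (sub_nonneg.2 p_le_one) (one_sub_le_exp_neg _) v_nonneg
      _ = exp (-(p i * v i)) := by rw [← exp_mul, neg_mul]

variable {R T : ι → ℝ}

theorem tendsto_one_sub_div_rpow_mul_sub (a s b : ℝ) (hR : Tendsto R l atTop) :
    Tendsto (fun i => (1 - a / R i) ^ (s * R i - b)) l (nhds (exp (-a * s))) := by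
  have base_tendsto : Tendsto (fun i => 1 - a / R i) l (nhds 1) := by
    simpa only [sub_zero] using (hR.const_div_atTop a).const_sub 1
  have rpow_tendsto : Tendsto (fun i => (1 - a / R i) ^ R i) l (nhds (exp (-a))) := by
    simpa only [Function.comp_def, neg_div, ← sub_eq_add_neg] using
      (tendsto_one_add_div_rpow_exp (-a)).comp hR
  have numerator_tendsto :
      Tendsto (fun i => ((1 - a / R i) ^ R i) ^ s) l (nhds (exp (-a * s))) := by
    simpa only [← exp_mul] using rpow_tendsto.rpow_const (.inl (exp_ne_zero _))
  have denominator_tendsto : Tendsto (fun i => (1 - a / R i) ^ b) l (nhds 1) := by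
    simpa only [one_rpow] using base_tendsto.rpow_const (.inl one_ne_zero)
  have quotient_tendsto :
      Tendsto (fun i => ((1 - a / R i) ^ R i) ^ s / (1 - a / R i) ^ b) l (nhds (exp (-a * s))) := by
    simpa only [Pi.div_def, div_one] using
      numerator_tendsto.div denominator_tendsto one_ne_zero
  refine quotient_tendsto.congr' ?_
  filter_upwards [base_tendsto.eventually_const_lt zero_lt_one] with i base_pos
  rw [rpow_sub base_pos, mul_comm s, rpow_mul base_pos.le]

theorem tendsto_sub_const_div_atTop (c : ℝ) (hR : Tendsto R l atTop)
    (hTR : Tendsto (fun i => T i / R i) l atTop) :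
    Tendsto (fun i => (T i - c) / R i) l atTop := by
  simpa only [sub_div, sub_eq_add_neg (_ / _)] using hTR.atTop_add (hR.const_div_atTop c).neg

theorem density_evolution_vanishes_texts_faster_general {x d s : ℝ} (hd : 0 < d)
    (hR : Tendsto R l atTop) (hTR : Tendsto (fun i => T i / R i) l atTop) :
    Tendsto (fun i => (1 - (d / R i) * (1 - x * d / R i) ^ (s * R i - 1)) ^ (T i - 1))
      l (nhds 0) := by
  have factor_tendsto := tendsto_one_sub_div_rpow_mul_sub (x * d) s 1 hR
  have sub_one_div_tendsto := tendsto_sub_const_div_atTop 1 hR hTR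
  have p_tendsto :
      Tendsto (fun i => (d / R i) * (1 - x * d / R i) ^ (s * R i - 1)) l (nhds 0) := by
    simpa only [zero_mul] using (hR.const_div_atTop d).mul factor_tendsto
  have sub_one_nonneg : ∀ᶠ i in l, 0 ≤ T i - 1 := by
    filter_upwards [sub_one_div_tendsto.eventually_ge_atTop 0, hR.eventually_gt_atTop 0]
      with i div_nonneg R_pos
    simpa only [zero_mul] using (le_div_iff₀ R_pos).1 div_nonneg
  refine tendsto_one_sub_rpow_zero (p_tendsto.eventually_le_const zero_lt_one) sub_one_nonneg ?_
  have limit_pos : 0 < d * exp (-(x * d) * s) := mul_pos hd (exp_pos _)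
  refine ((factor_tendsto.const_mul d).pos_mul_atTop limit_pos sub_one_div_tendsto).congr ?_
  intro i
  ring

end

/-- Part (b) of the compute-optimal scaling proposition: if the number of texts
grows strictly faster than the number of concepts (`T_n/R_n → ∞`), then for any
fixed `x ∈ (0,1]` the density-evolution quantity
`(1 − (d/R_n)·(1 − x·d/R_n)^{R_n/ε − 1})^{T_n − 1}` tends to `0`. -/
theorem density_evolution_vanishes_texts_faster
    (x d ε : ℝ) (hx : x ∈ Set.Ioc (0:ℝ) 1) (hd : 0 < d)
    (hε : ε ∈ Set.Ioc (0:ℝ) 1)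
    (R T : ℕ → ℝ) (hR : ∀ n, 0 < R n) (hT : ∀ n, 0 < T n)
    (hdR : ∀ n, d / R n ≤ 1) (hxdR : ∀ n, x * d / R n ≤ 1)
    (hRtop : Tendsto R atTop atTop) (hTtop : Tendsto T atTop atTop)
    (hratio : Tendsto (fun n => T n / R n) atTop atTop) :
    Tendsto
      (fun n => (1 - (d / R n) * (1 - x * d / R n) ^ (R n / ε - 1)) ^ (T n - 1))
      atTop (nhds 0) := by
  simpa only [div_eq_inv_mul _ ε] using
    density_evolution_vanishes_texts_faster_general (s := ε⁻¹) hd hRtop hratio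
end
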